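/- arXiv:1511.04190 — 9 statements merged into one kernel-verified Lean document; each statement's English description precedes it below -/
import Mathlib

section
/- Let G be a 3-regular simple graph on vertex set {1,…,n} with edge set E, and let W ⊆ {1,…,n} be a vertex cover of G with |W| = k. Identify candidates with vertices and, for each i ∈ {1,…,n}, define the vote S_i = { j : {i,j} ∈ E }. Set the committee C* = W and the set of non-outlier indices I = {1,…,n} ∖ W. Then Σ_{i∈I} |C* ∖ S_i| = (n−k)(k−3) (as an equality of integers). -/
section

variable {V : Type*} {G : SimpleGraph V} {W : Finset V} {v : V}

theorem neighborFinset_subset_of_isVertexCover [Fintype (G.neighborSet v)]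
    (hW : G.IsVertexCover (W : Set V)) (hv : v ∉ W) : G.neighborFinset v ⊆ W :=
  fun w hw => (hW ((G.mem_neighborFinset v w).mp hw)).resolve_left hv

variable [DecidableEq V]

theorem card_sdiff_neighborFinset_of_isVertexCover [Fintype (G.neighborSet v)]
    (hW : G.IsVertexCover (W : Set V)) (hv : v ∉ W) :
    ((W \ G.neighborFinset v).card : ℤ) = W.card - G.degree v := by
  rw [Finset.cast_card_sdiff (neighborFinset_subset_of_isVertexCover hW hv),
    G.card_neighborFinset_eq_degree]

theorem stmt_1_general [Fintype V] [DecidableRel G.Adj] {d : ℕ}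
    (hreg : G.IsRegularOfDegree d) (hW : G.IsVertexCover (W : Set V)) :
    (∑ v ∈ Finset.univ \ W, ((W \ G.neighborFinset v).card : ℤ))
      = ((Fintype.card V : ℤ) - W.card) * ((W.card : ℤ) - d) := by
  have score_eq : ∀ v ∈ Finset.univ \ W,
      ((W \ G.neighborFinset v).card : ℤ) = W.card - d := fun v hv => by
    rw [card_sdiff_neighborFinset_of_isVertexCover hW (Finset.mem_sdiff.mp hv).2,
      hreg.degree_eq v]
  rw [Finset.sum_congr rfl score_eq, Finset.sum_const, nsmul_eq_mul,
    Finset.cast_card_sdiff W.subset_univ, Finset.card_univ]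

end

/-- For a 3-regular graph `G` on vertices `Fin n`, a vertex cover `W` of
size `k`, votes `S i = neighborFinset i`, committee `W`, and non-outliers
`I = univ \ W`, the disapproval score `∑_{i ∈ I} |W \ S i|` equals `(n - k)(k - 3)`. -/
theorem stmt_1 (n k : ℕ) (G : SimpleGraph (Fin n)) [DecidableRel G.Adj]
    (hreg : G.IsRegularOfDegree 3)
    (W : Finset (Fin n)) (hW : W.card = k)
    (hcover : ∀ u v : Fin n, G.Adj u v → u ∈ W ∨ v ∈ W) :
    (∑ i ∈ Finset.univ \ W, ((W \ G.neighborFinset i).card : ℤ))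
      = ((n : ℤ) - (k : ℤ)) * ((k : ℤ) - 3) := by
  subst hW
  simpa only [Fintype.card_fin, Nat.cast_ofNat] using stmt_1_general hreg hcover
end

section
/- Let G be a d-regular simple graph with vertex set {1,…,n} and edges e_1,…,e_m (each edge a 2-element set of vertices), and let k ≤ n. Identify candidates with vertices and, for each edge index i ∈ {1,…,m}, define the vote S_i = { j ∈ {1,…,n} : j ∉ e_i }. Then G contains a clique of size k if and only if there exist a committee C* ⊆ {1,…,n} with |C*| = n−k and an index set I ⊆ {1,…,m} with |I| ≥ k(k−1)/2 such that Σ_{i∈I} |C* Δ S_i| ≤ (k−2)·k(k−1)/2 (as integers). -/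
open scoped symmDiff

/-!
Passing to complements, `|C ∆ eᶜ| = |W ∆ e|` for `W = Cᶜ`. An edge `e` of size `r` has
`|W ∆ e| = |W| - r + 2 |e \ W|`, so it scores at least `|W| - r`, with equality exactly when
`e ⊆ W`. If `r ≤ |W|` and at least `N = (|W| choose r)` edges have total score at most
`(|W| - r) N`, they are therefore all contained in `W`. As `W` has only `N` subsets of size `r`,
each of these is an edge.
-/

section Hyperclique

open Finset

variable {V ι : Type*} {e : ι → Finset V} {r : ℕ} {W : Finset V} {I : Finset ι}

/-- `W` is a clique of the `r`-uniform hypergraph with edges `e i`: every `r`-element subset of `W`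
is an edge. For `r = 2` these are the cliques of a graph. -/
def IsHyperclique (e : ι → Finset V) (r : ℕ) (W : Finset V) : Prop :=
  ∀ s ⊆ W, #s = r → ∃ i, e i = s

theorem isHyperclique_of_choose_le_card (he : ∀ i ∈ I, #(e i) = r) (hinj : Set.InjOn e I)
    (hsub : ∀ i ∈ I, e i ⊆ W) (hI : (#W).choose r ≤ #I) : IsHyperclique e r W := by
  classical
  have himage : I.image e = W.powersetCard r := by
    apply eq_of_subset_of_card_le
    · exact image_subset_iff.2 fun i hi ↦ mem_powersetCard.2 ⟨hsub i hi, he i hi⟩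
    · rwa [card_powersetCard, card_image_of_injOn hinj]
  intro s hsW hs
  have hmem : s ∈ I.image e := himage ▸ mem_powersetCard.2 ⟨hsW, hs⟩
  obtain ⟨i, -, hi⟩ := mem_image.1 hmem
  exact ⟨i, hi⟩

variable [DecidableEq V]

theorem isHyperclique_two_iff :
    IsHyperclique e 2 W ↔ ∀ u ∈ W, ∀ v ∈ W, u ≠ v → ∃ i, e i = {u, v} := by
  constructor
  · intro hW u hu v hv huv
    exact hW {u, v} (insert_subset hu (singleton_subset_iff.2 hv)) (card_pair huv)
  · intro hW s hsW hs
    obtain ⟨u, v, huv, rfl⟩ := card_eq_two.1 hs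
    exact hW u (hsW (by simp)) v (hsW (by simp)) huv

theorem IsHyperclique.exists_image_eq_powersetCard (hW : IsHyperclique e r W) :
    ∃ I : Finset ι, #I = (#W).choose r ∧ I.image e = W.powersetCard r := by
  have hsurj : Set.SurjOn e Set.univ (W.powersetCard r) := by
    intro s hs
    obtain ⟨hsW, hsr⟩ := mem_powersetCard.1 hs
    obtain ⟨i, hi⟩ := hW s hsW hsr
    exact ⟨i, Set.mem_univ i, hi⟩
  obtain ⟨I, -, hinj, himage⟩ := exists_subset_injOn_image_eq_of_surjOn _ _ hsurj
  exact ⟨I, by rw [← card_image_of_injOn hinj, himage, card_powersetCard], himage⟩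

theorem card_symmDiff_eq_sub_add (s t : Finset V) :
    (#(s ∆ t) : ℤ) = #s - #t + 2 * #(t \ s) := by
  have hsymm : #(s ∆ t) = #(s \ t) + #(t \ s) := card_union_of_disjoint disjoint_sdiff_sdiff
  have hs := card_sdiff_add_card_inter s t
  have ht := card_sdiff_add_card_inter t s
  rw [inter_comm] at ht
  lia

theorem sum_card_symmDiff_eq (he : ∀ i ∈ I, #(e i) = r) :
    ∑ i ∈ I, (#(W ∆ e i) : ℤ) = (#W - r) * #I + 2 * ∑ i ∈ I, (#(e i \ W) : ℤ) := by
  calc ∑ i ∈ I, (#(W ∆ e i) : ℤ)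
      = ∑ i ∈ I, ((#W - r : ℤ) + 2 * #(e i \ W)) :=
        sum_congr rfl fun i hi ↦ by rw [card_symmDiff_eq_sub_add, he i hi]
    _ = (#W - r) * #I + 2 * ∑ i ∈ I, (#(e i \ W) : ℤ) := by
        rw [sum_add_distrib, sum_const, nsmul_eq_mul, mul_comm, mul_sum]

theorem subset_of_sum_card_symmDiff_le {N : ℕ} (he : ∀ i ∈ I, #(e i) = r) (hr : r ≤ #W)
    (hI : N ≤ #I) (hsum : ∑ i ∈ I, (#(W ∆ e i) : ℤ) ≤ (#W - r) * N) :
    ∀ i ∈ I, e i ⊆ W := by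
  have hmul : (#W - r : ℤ) * N ≤ (#W - r) * #I := by gcongr; lia
  have hle : ∑ i ∈ I, (#(e i \ W) : ℤ) ≤ 0 := by
    rw [sum_card_symmDiff_eq he] at hsum
    linarith
  have hzero : ∑ i ∈ I, #(e i \ W) = 0 := by
    exact_mod_cast hle.antisymm (by positivity)
  intro i hi
  exact sdiff_eq_empty_iff_subset.1 (card_eq_zero.1 (sum_eq_zero_iff.1 hzero i hi))

theorem isHyperclique_iff_exists_sum_card_symmDiff_le (he : ∀ i, #(e i) = r)
    (hinj : e.Injective) :
    IsHyperclique e r W ↔ ∃ I : Finset ι, (#W).choose r ≤ #I ∧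
      ∑ i ∈ I, (#(W ∆ e i) : ℤ) ≤ (#W - r) * ((#W).choose r : ℤ) := by
  constructor
  · intro hW
    obtain ⟨I, hI, himage⟩ := hW.exists_image_eq_powersetCard
    have hsub (i) (hi : i ∈ I) : e i ⊆ W :=
      (mem_powersetCard.1 (himage ▸ mem_image_of_mem e hi)).1
    have hzero : ∑ i ∈ I, (#(e i \ W) : ℤ) = 0 :=
      sum_eq_zero fun i hi ↦ by simp [sdiff_eq_empty_iff_subset.2 (hsub i hi)]
    refine ⟨I, hI.ge, ?_⟩
    rw [sum_card_symmDiff_eq fun i _ ↦ he i, hzero, hI, mul_zero, add_zero]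
  · rintro ⟨I, hI, hsum⟩ s hsW hs
    have hr : r ≤ #W := hs ▸ card_le_card hsW
    have hsub := subset_of_sum_card_symmDiff_le (fun i _ ↦ he i) hr hI hsum
    exact isHyperclique_of_choose_le_card (fun i _ ↦ he i) hinj.injOn hsub hI s hsW hs

theorem stmt_3_general [Fintype V] {k : ℕ} (hk : k ≤ Fintype.card V) (he : ∀ i, #(e i) = r)
    (hinj : e.Injective) :
    (∃ W : Finset V, #W = k ∧ IsHyperclique e r W) ↔
      ∃ (C : Finset V) (I : Finset ι), #C = Fintype.card V - k ∧ k.choose r ≤ #I ∧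
        ∑ i ∈ I, (#(C ∆ (e i)ᶜ) : ℤ) ≤ (k - r) * (k.choose r : ℤ) := by
  have hscore (C : Finset V) (i : ι) : C ∆ (e i)ᶜ = Cᶜ ∆ e i := by
    rw [← compl_symmDiff_compl, compl_compl]
  have hcard (C : Finset V) : #C = Fintype.card V - k ↔ #Cᶜ = k := by
    have := card_add_card_compl C
    lia
  rw [compl_surjective.exists]
  simp only [hscore, hcard, exists_and_left]
  refine exists_congr fun C ↦ and_congr_right ?_
  rintro rfl
  exact isHyperclique_iff_exists_sum_card_symmDiff_le he hinj

end Hyperclique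

/-- `G` is a `d`-regular simple graph on vertices `Fin n`, given by its
list of distinct edges `e 1, …, e m` (each a 2-element set of vertices). Candidates
are vertices, and the vote for edge index `i` is the complement `(e i)ᶜ`. Then `G`
has a clique of size `k` iff there are a committee `C` of size `n - k` and an index
set `I` of size at least `k(k-1)/2` with `∑_{i ∈ I} |C ∆ (e i)ᶜ| ≤ (k-2)·k(k-1)/2`. -/
theorem stmt_3 (n m d k : ℕ) (hk : k ≤ n)
    (e : Fin m → Finset (Fin n))
    (he2 : ∀ i, (e i).card = 2)
    (hinj : Function.Injective e)
    (hreg : ∀ v : Fin n, (Finset.univ.filter fun i => v ∈ e i).card = d) :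
    (∃ W : Finset (Fin n), W.card = k ∧
        ∀ u ∈ W, ∀ v ∈ W, u ≠ v → ∃ i, e i = {u, v})
    ↔ ∃ (C : Finset (Fin n)) (I : Finset (Fin m)),
        C.card = n - k ∧ k * (k - 1) / 2 ≤ I.card ∧
        (∑ i ∈ I, ((C ∆ (e i)ᶜ).card : ℤ))
          ≤ ((k : ℤ) - 2) * ((k * (k - 1) / 2 : ℕ) : ℤ) := by
  simpa only [isHyperclique_two_iff, Fintype.card_fin, Nat.choose_two_right, Nat.cast_ofNat]
    using stmt_3_general (hk.trans_eq (Fintype.card_fin n).symm) he2 hinj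
end

section
/- Let G be a d-regular simple graph with vertex set {1,…,n} and edges e_1,…,e_m (each edge a 2-element set of vertices), and let k ≤ n. Identify candidates with vertices and, for each edge index i ∈ {1,…,m}, define the vote S_i = { j ∈ {1,…,n} : j ∉ e_i }. Then G contains a clique of size k if and only if there exist a committee C* ⊆ {1,…,n} with |C*| = n−k and an index set I ⊆ {1,…,m} with |I| ≥ k(k−1)/2 such that Σ_{i∈I} |C* ∖ S_i| = 0. -/
/-!
Score zero means that no voted edge meets the committee, so the voted edges all lie in its
complement `W`, a set of `k` vertices. Since `W` has only `k.choose 2` pairs, it contains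
`k.choose 2` distinct edges exactly when every pair in `W` is an edge, that is, when `W` is a
clique. The same count works for `r`-subsets in an `r`-uniform hypergraph.
-/

section

open Finset

variable {α ι : Type*}

theorem sum_card_sdiff_eq_zero_iff [DecidableEq α] {C : Finset α} {S : ι → Finset α}
    {I : Finset ι} :
    ∑ i ∈ I, #(C \ S i) = 0 ↔ ∀ i ∈ I, C ⊆ S i := by
  simp only [sum_eq_zero_iff, card_eq_zero, sdiff_eq_empty_iff_subset]

theorem exists_choose_le_card_of_powersetCard_subset_range {e : ι → Finset α} {r : ℕ}
    {W : Finset α} (hW : (W.powersetCard r : Set (Finset α)) ⊆ Set.range e) :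
    ∃ I : Finset ι, (#W).choose r ≤ #I ∧ ∀ i ∈ I, e i ⊆ W := by
  classical
  rw [← Set.image_univ] at hW
  obtain ⟨I, -, hI⟩ := subset_set_image_iff.mp hW
  refine ⟨I, ?_, fun i hi ↦ ?_⟩
  · rw [← card_powersetCard, ← hI]
    exact card_image_le
  · exact (mem_powersetCard.mp (hI ▸ mem_image_of_mem e hi)).1

theorem image_eq_powersetCard_of_choose_le_card [DecidableEq α] {e : ι → Finset α} {r : ℕ}
    {W : Finset α} {I : Finset ι} (he : ∀ i ∈ I, #(e i) = r) (hinj : Set.InjOn e I)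
    (hcard : (#W).choose r ≤ #I) (hsub : ∀ i ∈ I, e i ⊆ W) :
    I.image e = W.powersetCard r := by
  apply eq_of_subset_of_card_le
  · exact image_subset_iff.mpr fun i hi ↦ mem_powersetCard.mpr ⟨hsub i hi, he i hi⟩
  · rwa [card_powersetCard, card_image_of_injOn hinj]

theorem powersetCard_subset_range_iff {e : ι → Finset α} {r : ℕ} (he : ∀ i, #(e i) = r)
    (hinj : Function.Injective e) {W : Finset α} :
    (W.powersetCard r : Set (Finset α)) ⊆ Set.range e ↔
      ∃ I : Finset ι, (#W).choose r ≤ #I ∧ ∀ i ∈ I, e i ⊆ W := by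
  classical
  refine ⟨exists_choose_le_card_of_powersetCard_subset_range, ?_⟩
  rintro ⟨I, hcard, hsub⟩
  rw [← image_eq_powersetCard_of_choose_le_card (fun i _ ↦ he i) hinj.injOn hcard hsub, coe_image]
  exact Set.image_subset_range e I

theorem powersetCard_two_subset_iff [DecidableEq α] {W : Finset α}
    {E : Set (Finset α)} :
    (W.powersetCard 2 : Set (Finset α)) ⊆ E ↔ ∀ u ∈ W, ∀ v ∈ W, u ≠ v → {u, v} ∈ E := by
  constructor
  · intro h u hu v hv huv
    exact h (mem_powersetCard.mpr ⟨insert_subset hu (singleton_subset_iff.mpr hv), card_pair huv⟩)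
  · intro h s hs
    obtain ⟨hsW, hs2⟩ := mem_powersetCard.mp hs
    obtain ⟨u, v, huv, rfl⟩ := card_eq_two.mp hs2
    exact h u (hsW (by simp)) v (hsW (by simp)) huv

theorem exists_card_eq_iff_exists_compl [Fintype α] [DecidableEq α] {k : ℕ}
    (hk : k ≤ Fintype.card α) {p : Finset α → Prop} :
    (∃ W, #W = k ∧ p W) ↔ ∃ C : Finset α, #C = Fintype.card α - k ∧ p Cᶜ := by
  rw [compl_surjective.exists]
  refine exists_congr fun C ↦ and_congr_left fun _ ↦ ?_
  have hC : #C + #Cᶜ = Fintype.card α := card_add_card_compl C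
  omega

/-- A set of `k` vertices all of whose `r`-subsets are edges plays the role of a `k`-clique in an
`r`-uniform hypergraph with edges `e i`. -/
theorem stmt_4_general [Fintype α] [DecidableEq α] {r k : ℕ} (hk : k ≤ Fintype.card α)
    {e : ι → Finset α} (he : ∀ i, #(e i) = r) (hinj : Function.Injective e) :
    (∃ W : Finset α, #W = k ∧ (W.powersetCard r : Set (Finset α)) ⊆ Set.range e) ↔
      ∃ (C : Finset α) (I : Finset ι),
        #C = Fintype.card α - k ∧ k.choose r ≤ #I ∧ ∑ i ∈ I, #(C \ (e i)ᶜ) = 0 := by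
  calc
    _ ↔ ∃ W : Finset α, #W = k ∧ ∃ I : Finset ι, k.choose r ≤ #I ∧ ∀ i ∈ I, e i ⊆ W :=
      exists_congr fun W ↦ and_congr_right fun hW ↦ hW ▸ powersetCard_subset_range_iff he hinj
    _ ↔ ∃ C : Finset α, #C = Fintype.card α - k ∧
          ∃ I : Finset ι, k.choose r ≤ #I ∧ ∀ i ∈ I, e i ⊆ Cᶜ :=
      exists_card_eq_iff_exists_compl hk
    _ ↔ _ := by
      simp only [sum_card_sdiff_eq_zero_iff, subset_compl_comm, exists_and_left]

end

/-- `G` is a `d`-regular simple graph on vertices `Fin n`, given by its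
list of distinct edges `e 1, …, e m` (each a 2-element set of vertices). Candidates
are vertices, and the vote for edge index `i` is the complement `(e i)ᶜ`. Then `G`
has a clique of size `k` iff there are a committee `C` of size `n - k` and an index
set `I` of size at least `k(k-1)/2` with disapproval score `∑_{i ∈ I} |C \ (e i)ᶜ| = 0`. -/
theorem stmt_4 (n m d k : ℕ) (hk : k ≤ n)
    (e : Fin m → Finset (Fin n))
    (he2 : ∀ i, (e i).card = 2)
    (hinj : Function.Injective e)
    (hreg : ∀ v : Fin n, (Finset.univ.filter fun i => v ∈ e i).card = d) :
    (∃ W : Finset (Fin n), W.card = k ∧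
        ∀ u ∈ W, ∀ v ∈ W, u ≠ v → ∃ i, e i = {u, v})
    ↔ ∃ (C : Finset (Fin n)) (I : Finset (Fin m)),
        C.card = n - k ∧ k * (k - 1) / 2 ≤ I.card ∧
        (∑ i ∈ I, (C \ (e i)ᶜ).card) = 0 := by
  simpa only [powersetCard_two_subset_iff, Set.mem_range, Nat.choose_two_right, Fintype.card_fin]
    using stmt_4_general (hk.trans_eq (Fintype.card_fin n).symm) he2 hinj
end

section
/- Let G be a simple graph with vertex set {1,…,n} and edges e_1,…,e_m (each edge a 2-element set of vertices), and let k ≤ n. Identify candidates with vertices and, for each edge index i ∈ {1,…,m}, define the vote S_i = e_i (so every vote approves exactly two candidates). Then G contains a clique of size k if and only if there exist a committee C* ⊆ {1,…,n} with |C*| = k and an index set I ⊆ {1,…,m} with |I| ≥ k(k−1)/2 such that Σ_{i∈I} |C* Δ S_i| ≤ (k−2)·k(k−1)/2 (as integers). -/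
open scoped symmDiff

/-!
Since `|C ∆ S| = |C| - |S| + 2 |S \ C|`, every vote of size `r` costs a committee `C` at least
`|C| - r`, and exactly that much if and only if it lies inside `C`. So, for `r ≤ |C|`, a family of
at least `N` such votes with total cost at most `(|C| - r) N` consists of subsets of `C` only. For
`N = |C|.choose r` and distinct votes, these must then be all the `r`-subsets of `C`.
-/

section UniformVotes

variable {α ι : Type*} [DecidableEq α] {e : ι → Finset α} {C : Finset α} {I : Finset ι} {r : ℕ}

theorem card_symmDiff_add_card (C S : Finset α) :
    (C ∆ S).card + S.card = C.card + 2 * (S \ C).card := by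
  have card_union : (C ∆ S).card = (C \ S).card + (S \ C).card :=
    Finset.card_union_of_disjoint disjoint_sdiff_sdiff
  have card_C := Finset.card_sdiff_add_card_inter C S
  have card_S := Finset.card_sdiff_add_card_inter S C
  rw [Finset.inter_comm] at card_S
  lia

theorem sum_card_symmDiff_of_uniform (C : Finset α) (he : ∀ i ∈ I, (e i).card = r) :
    ∑ i ∈ I, ((C ∆ e i).card : ℤ) =
      (C.card - r) * I.card + 2 * ∑ i ∈ I, ((e i \ C).card : ℤ) := by
  have score : ∀ i ∈ I, ((C ∆ e i).card : ℤ) = (C.card - r) + 2 * ((e i \ C).card : ℤ) := by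
    intro i hi
    have := card_symmDiff_add_card C (e i)
    rw [he i hi] at this
    lia
  rw [Finset.sum_congr rfl score, Finset.sum_add_distrib, Finset.sum_const, nsmul_eq_mul,
    mul_comm, Finset.mul_sum]

theorem forall_subset_of_sum_card_symmDiff_le {N : ℕ} (he : ∀ i ∈ I, (e i).card = r)
    (hr : r ≤ C.card) (hN : N ≤ I.card)
    (hsum : ∑ i ∈ I, ((C ∆ e i).card : ℤ) ≤ (C.card - r) * N) :
    ∀ i ∈ I, e i ⊆ C := by
  have base_cost : ((C.card : ℤ) - r) * N ≤ (C.card - r) * I.card := by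
    have : (0 : ℤ) ≤ C.card - r := by lia
    gcongr
  have excess_nonpos : ∑ i ∈ I, (e i \ C).card ≤ 0 := by
    rw [sum_card_symmDiff_of_uniform C he] at hsum
    zify
    linarith
  intro i hi
  rw [← Finset.sdiff_eq_empty_iff_subset, ← Finset.card_eq_zero]
  exact Finset.sum_eq_zero_iff.1 (Nat.le_zero.1 excess_nonpos) i hi

theorem exists_sum_card_symmDiff_eq_of_powersetCard_subset_range
    (hC : (C.powersetCard r : Set (Finset α)) ⊆ Set.range e) :
    ∃ I : Finset ι, I.card = C.card.choose r ∧
      ∑ i ∈ I, ((C ∆ e i).card : ℤ) = (C.card - r) * C.card.choose r := by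
  obtain ⟨I, -, hinj, himage⟩ :=
    Finset.exists_subset_injOn_image_eq_of_surjOn Set.univ (C.powersetCard r)
      (by rwa [Set.SurjOn, Set.image_univ])
  have hI : I.card = C.card.choose r := by
    rw [← Finset.card_image_of_injOn hinj, himage, Finset.card_powersetCard]
  have hmem : ∀ i ∈ I, e i ⊆ C ∧ (e i).card = r := fun i hi =>
    Finset.mem_powersetCard.1 (himage ▸ Finset.mem_image_of_mem e hi)
  have no_excess : ∑ i ∈ I, ((e i \ C).card : ℤ) = 0 :=
    Finset.sum_eq_zero fun i hi => by simp [Finset.sdiff_eq_empty_iff_subset.2 (hmem i hi).1]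
  refine ⟨I, hI, ?_⟩
  rw [sum_card_symmDiff_of_uniform C fun i hi => (hmem i hi).2, no_excess, hI, mul_zero, add_zero]

theorem powersetCard_subset_range_of_sum_card_symmDiff_le
    (he : ∀ i ∈ I, (e i).card = r) (hinj : Set.InjOn e I) (hI : C.card.choose r ≤ I.card)
    (hsum : ∑ i ∈ I, ((C ∆ e i).card : ℤ) ≤ (C.card - r) * C.card.choose r) :
    (C.powersetCard r : Set (Finset α)) ⊆ Set.range e := by
  intro s hs
  have hr : r ≤ C.card := by
    obtain ⟨hsC, rfl⟩ := Finset.mem_powersetCard.1 hs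
    exact Finset.card_le_card hsC
  have hmaps : Set.MapsTo e I (C.powersetCard r) := fun i hi =>
    Finset.mem_powersetCard.2 ⟨forall_subset_of_sum_card_symmDiff_le he hr hI hsum i hi, he i hi⟩
  have hsurj : Set.SurjOn e I (C.powersetCard r) :=
    Finset.surjOn_of_injOn_of_card_le e hmaps hinj (by rwa [Finset.card_powersetCard])
  exact Set.image_subset_range e I (hsurj hs)

theorem coe_powersetCard_two_subset_iff {A : Set (Finset α)} :
    (C.powersetCard 2 : Set (Finset α)) ⊆ A ↔
      ∀ u ∈ C, ∀ v ∈ C, u ≠ v → {u, v} ∈ A := by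
  constructor
  · intro h u hu v hv huv
    refine h (Finset.mem_powersetCard.2 ⟨?_, Finset.card_pair huv⟩)
    exact Finset.insert_subset hu (Finset.singleton_subset_iff.2 hv)
  · intro h s hs
    obtain ⟨hsC, hs2⟩ := Finset.mem_powersetCard.1 hs
    obtain ⟨u, v, huv, rfl⟩ := Finset.card_eq_two.1 hs2
    exact h u (hsC (by simp)) v (hsC (by simp)) huv

theorem stmt_5_general (k : ℕ) (he : ∀ i, (e i).card = r) (hinj : Function.Injective e) :
    (∃ W : Finset α, W.card = k ∧ (W.powersetCard r : Set (Finset α)) ⊆ Set.range e) ↔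
      ∃ (C : Finset α) (I : Finset ι), C.card = k ∧ k.choose r ≤ I.card ∧
        ∑ i ∈ I, ((C ∆ e i).card : ℤ) ≤ (k - r) * k.choose r := by
  constructor
  · rintro ⟨W, rfl, hW⟩
    obtain ⟨I, hI, hsum⟩ := exists_sum_card_symmDiff_eq_of_powersetCard_subset_range hW
    exact ⟨W, I, rfl, hI.ge, hsum.le⟩
  · rintro ⟨C, I, rfl, hI, hsum⟩
    exact ⟨C, rfl,
      powersetCard_subset_range_of_sum_card_symmDiff_le (fun i _ => he i) hinj.injOn hI hsum⟩

end UniformVotes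

/-- `G` is a simple graph on vertices `Fin n`, given by its list of
distinct edges `e 1, …, e m` (each a 2-element set of vertices). Candidates are
vertices and the vote for edge index `i` is `e i` itself. Then `G` has a clique of
size `k` iff there are a committee `C` of size `k` and an index set `I` of size at
least `k(k-1)/2` with minisum score `∑_{i ∈ I} |C ∆ e i| ≤ (k-2)·k(k-1)/2`. -/
theorem stmt_5 (n m k : ℕ) (hk : k ≤ n)
    (e : Fin m → Finset (Fin n))
    (he2 : ∀ i, (e i).card = 2)
    (hinj : Function.Injective e) :
    (∃ W : Finset (Fin n), W.card = k ∧
        ∀ u ∈ W, ∀ v ∈ W, u ≠ v → ∃ i, e i = {u, v})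
    ↔ ∃ (C : Finset (Fin n)) (I : Finset (Fin m)),
        C.card = k ∧ k * (k - 1) / 2 ≤ I.card ∧
        (∑ i ∈ I, ((C ∆ e i).card : ℤ))
          ≤ ((k : ℤ) - 2) * ((k * (k - 1) / 2 : ℕ) : ℤ) := by
  simpa only [coe_powersetCard_two_subset_iff, Set.mem_range, Nat.choose_two_right, Nat.cast_ofNat]
    using stmt_5_general k he2 hinj
end

section
/- Let G be a d-regular simple graph with vertex set {1,…,n} and edges e_1,…,e_m, and let W be a clique of size k in G with Q the set of edges having both endpoints in W (so |Q| = k(k−1)/2). Identify candidates with edge indices and, for each vertex i ∈ {1,…,n}, define the vote S_i = { j ∈ {1,…,m} : i ∉ e_j }. Set the committee C* = { j : e_j ∈ Q } and the set of non-outlier indices I = { i : i ∉ W }. Then Σ_{i∈I} |C* Δ S_i| = (n−k)·(m − d − k(k−1)/2), and in particular Σ_{i∈I} |C* Δ S_i| ≤ (n−k)·(m − k(k−1)/2) (as integers). -/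
open scoped symmDiff

/-!
For `i ∉ W`, no edge within `W` contains `i`, so the committee is a subset of the vote of `i`, and
their symmetric difference consists of the edges that neither contain `i` nor lie within `W`. There
are `m - deg i - |Q|` of these, so the upper bound `m - |Q|` for one vote is off by exactly `deg i`.
-/

section VertexVotes

open Finset

variable {V E : Type*} [DecidableEq V] [Fintype E]

/-- The indices of the edges with all endpoints in `W`: the committee `C*` of the clique `W`.
Edges are an indexed family of vertex sets, so loops, parallel edges and hyperedges are allowed. -/
def edgesWithin (e : E → Finset V) (W : Finset V) : Finset E :=
  univ.filter fun j => e j ⊆ W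

/-- The vote `S i` of the vertex `i`: the indices of the edges that do not contain `i`. -/
def vertexVote (e : E → Finset V) (i : V) : Finset E :=
  univ.filter fun j => i ∉ e j

/-- The degree of the vertex `i`: the number of edges, counted by index, that contain `i`. -/
def incidenceDegree (e : E → Finset V) (i : V) : ℕ :=
  (univ.filter fun j => i ∈ e j).card

variable {e : E → Finset V} {I W : Finset V}

theorem incidenceDegree_add_card_vertexVote (e : E → Finset V) (i : V) :
    incidenceDegree e i + (vertexVote e i).card = Fintype.card E :=
  card_filter_add_card_filter_not (s := univ) fun j => i ∈ e j

theorem edgesWithin_subset_vertexVote {i : V} (hi : i ∉ W) :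
    edgesWithin e W ⊆ vertexVote e i :=
  monotone_filter_right univ fun _ _ hjW hij => hi (hjW hij)

theorem card_edgesWithin_symmDiff_vertexVote [DecidableEq E] {i : V} (hi : i ∉ W) :
    ((edgesWithin e W ∆ vertexVote e i).card : ℤ) =
      Fintype.card E - incidenceDegree e i - (edgesWithin e W).card := by
  have hsub : edgesWithin e W ⊆ vertexVote e i := edgesWithin_subset_vertexVote hi
  rw [symmDiff_of_le hsub, cast_card_sdiff hsub, ← incidenceDegree_add_card_vertexVote e i]
  push_cast
  ring

theorem sum_card_edgesWithin_symmDiff_vertexVote [DecidableEq E] (e : E → Finset V)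
    (hI : Disjoint I W) :
    ∑ i ∈ I, ((edgesWithin e W ∆ vertexVote e i).card : ℤ) =
      I.card * (Fintype.card E - (edgesWithin e W).card) - ∑ i ∈ I, (incidenceDegree e i : ℤ) := by
  calc ∑ i ∈ I, ((edgesWithin e W ∆ vertexVote e i).card : ℤ)
    _ = ∑ i ∈ I, ((Fintype.card E - (edgesWithin e W).card : ℤ) - incidenceDegree e i) :=
      sum_congr rfl fun i hi => by
        rw [card_edgesWithin_symmDiff_vertexVote (disjoint_left.mp hI hi), sub_right_comm]
    _ = I.card * (Fintype.card E - (edgesWithin e W).card) -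
          ∑ i ∈ I, (incidenceDegree e i : ℤ) := by
      rw [sum_sub_distrib, sum_const, nsmul_eq_mul]

theorem bijOn_edgesWithin_powersetCard_two (hcard : ∀ j, (e j).card = 2)
    (hinj : Function.Injective e)
    (hclique : ∀ u ∈ W, ∀ v ∈ W, u ≠ v → ∃ j, e j = {u, v}) :
    Set.BijOn e (edgesWithin e W) (W.powersetCard 2) := by
  refine ⟨fun j hj => ?_, hinj.injOn, fun s hs => ?_⟩
  · exact mem_powersetCard.mpr ⟨(mem_filter.mp hj).2, hcard j⟩
  · obtain ⟨hsW, hs2⟩ := mem_powersetCard.mp hs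
    obtain ⟨u, v, huv, rfl⟩ := card_eq_two.mp hs2
    obtain ⟨hu, hv⟩ : u ∈ W ∧ v ∈ W := by
      simpa only [insert_subset_iff, singleton_subset_iff] using hsW
    obtain ⟨j, hj⟩ := hclique u hu v hv huv
    exact ⟨j, mem_filter.mpr ⟨mem_univ j, hj ▸ hsW⟩, hj⟩

/-- `hclique` says that `W` is a hyperclique: the edges within `W` are exactly its `r`-element
subsets, each occurring once. Graphs are the case `r = 2`. -/
theorem stmt_8_general [DecidableEq E] {d r : ℕ}
    (hclique : Set.BijOn e (edgesWithin e W) (W.powersetCard r))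
    (hI : Disjoint I W) (hdeg : ∀ i ∈ I, incidenceDegree e i = d) :
    (edgesWithin e W).card = W.card.choose r ∧
    ∑ i ∈ I, ((edgesWithin e W ∆ vertexVote e i).card : ℤ) =
      I.card * (Fintype.card E - d - W.card.choose r) ∧
    ∑ i ∈ I, ((edgesWithin e W ∆ vertexVote e i).card : ℤ) ≤
      I.card * (Fintype.card E - W.card.choose r) := by
  have hQ : (edgesWithin e W).card = W.card.choose r := by
    rw [hclique.finsetCard_eq, card_powersetCard]
  have hdegSum : ∑ i ∈ I, (incidenceDegree e i : ℤ) = I.card * d := by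
    rw [sum_congr rfl fun i hi => congrArg Nat.cast (hdeg i hi), sum_const, nsmul_eq_mul]
  have hscore := sum_card_edgesWithin_symmDiff_vertexVote e hI
  rw [hQ, hdegSum] at hscore
  refine ⟨hQ, ?_, ?_⟩
  · rw [hscore]
    ring
  · rw [hscore]
    exact sub_le_self _ (by positivity)

end VertexVotes

/-- `G` is a `d`-regular simple graph on vertices `Fin n`, given by its
list of distinct edges `e 1, …, e m`, and `W` is a clique of size `k`. Candidates are
edge indices; the vote of vertex `i` is `{j | i ∉ e j}`. Let `Q` (the committee) be
the set of indices of edges with both endpoints in `W` (so `|Q| = k(k-1)/2`), and let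
the non-outliers be the vertices outside `W`. Then the minisum score equals
`(n-k)(m - d - k(k-1)/2)`, and in particular is at most `(n-k)(m - k(k-1)/2)`. -/
theorem stmt_8 (n m d k : ℕ)
    (e : Fin m → Finset (Fin n))
    (he2 : ∀ j, (e j).card = 2)
    (hinj : Function.Injective e)
    (hreg : ∀ v : Fin n, (Finset.univ.filter fun j => v ∈ e j).card = d)
    (W : Finset (Fin n)) (hW : W.card = k)
    (hclique : ∀ u ∈ W, ∀ v ∈ W, u ≠ v → ∃ j, e j = {u, v}) :
    (Finset.univ.filter fun j => e j ⊆ W).card = k * (k - 1) / 2 ∧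
    (∑ i ∈ Finset.univ \ W,
        (((Finset.univ.filter fun j => e j ⊆ W) ∆
            (Finset.univ.filter fun j : Fin m => i ∉ e j)).card : ℤ))
      = ((n : ℤ) - (k : ℤ)) * ((m : ℤ) - (d : ℤ) - ((k * (k - 1) / 2 : ℕ) : ℤ)) ∧
    (∑ i ∈ Finset.univ \ W,
        (((Finset.univ.filter fun j => e j ⊆ W) ∆
            (Finset.univ.filter fun j : Fin m => i ∉ e j)).card : ℤ))
      ≤ ((n : ℤ) - (k : ℤ)) * ((m : ℤ) - ((k * (k - 1) / 2 : ℕ) : ℤ)) := by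
  subst hW
  have houtside : ((Finset.univ \ W).card : ℤ) = n - W.card := by
    rw [Finset.cast_card_sdiff W.subset_univ, Finset.card_fin]
  rw [← Nat.choose_two_right, ← houtside]
  simpa only [Fintype.card_fin] using!
    stmt_8_general (bijOn_edgesWithin_powersetCard_two he2 hinj hclique) Finset.sdiff_disjoint
      fun i _ => hreg i
end

section
/- Let G be a d-regular simple graph with vertex set {1,…,n} and edges e_1,…,e_m, and let k ≤ n. Identify candidates with edge indices and, for each vertex i ∈ {1,…,n}, define the vote S_i = { j ∈ {1,…,m} : i ∉ e_j }. Then G contains a clique of size k if and only if there exist a committee C* ⊆ {1,…,m} with |C*| = k(k−1)/2 and an index set I ⊆ {1,…,n} with |I| ≥ n−k such that Σ_{i∈I} |C* ∖ S_i| = 0. -/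
/-!
A committee `C` and an index set `I` have disapproval score zero exactly when no edge of `C` meets
`I`, that is, when all edges of `C` lie in the complement of `I`, which has at most `k` vertices
and can be enlarged to a set of exactly `k`.
A set of `k` vertices has only `k(k-1)/2` pairs, so `k(k-1)/2` distinct edges inside it exhaust
them and the set is a clique. The same count works for `r`-uniform hypergraphs, with `k.choose r`
in place of `k(k-1)/2`.
-/

section

variable {V ι : Type*}

theorem forall_mem_powersetCard_two_iff [DecidableEq V] {W : Finset V} {P : Finset V → Prop} :
    (∀ s ∈ W.powersetCard 2, P s) ↔ ∀ u ∈ W, ∀ v ∈ W, u ≠ v → P {u, v} := by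
  constructor
  · intro h u hu v hv huv
    exact h _ (Finset.mem_powersetCard.mpr
      ⟨Finset.insert_subset hu (Finset.singleton_subset_iff.mpr hv), Finset.card_pair huv⟩)
  · intro h s hs
    obtain ⟨hsW, hcard⟩ := Finset.mem_powersetCard.mp hs
    obtain ⟨u, v, huv, rfl⟩ := Finset.card_eq_two.mp hcard
    exact h u (hsW (by simp)) v (hsW (by simp)) huv

theorem forall_mem_powersetCard_exists_eq_iff {e : ι → Finset V} {r : ℕ}
    (he : ∀ j, (e j).card = r) (hinj : Function.Injective e) (W : Finset V) :
    (∀ s ∈ W.powersetCard r, ∃ j, e j = s) ↔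
      ∃ C : Finset ι, C.card = W.card.choose r ∧ ∀ j ∈ C, e j ⊆ W := by
  classical
  constructor
  · intro h
    have hrange : (W.powersetCard r : Set (Finset V)) ⊆ e '' Set.univ := fun s hs => by
      simpa using h s hs
    obtain ⟨C, -, himage⟩ := Finset.subset_set_image_iff.mp hrange
    refine ⟨C, ?_, fun j hj => ?_⟩
    · rw [← Finset.card_powersetCard, ← himage, Finset.card_image_of_injective _ hinj]
    · exact (Finset.mem_powersetCard.mp (himage ▸ Finset.mem_image_of_mem e hj)).1
  · rintro ⟨C, hcard, hCW⟩ s hs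
    have hsub : C.image e ⊆ W.powersetCard r :=
      Finset.image_subset_iff.mpr fun j hj => Finset.mem_powersetCard.mpr ⟨hCW j hj, he j⟩
    have himage : C.image e = W.powersetCard r :=
      Finset.eq_of_subset_of_card_le hsub <| by
        rw [Finset.card_powersetCard, Finset.card_image_of_injective _ hinj, hcard]
    obtain ⟨j, -, hj⟩ := Finset.mem_image.mp (himage ▸ hs)
    exact ⟨j, hj⟩

variable [DecidableEq V] [Fintype ι] [DecidableEq ι]

theorem sum_card_sdiff_filter_notMem_eq_zero_iff {e : ι → Finset V} {C : Finset ι}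
    {I : Finset V} :
    ∑ i ∈ I, (C \ Finset.univ.filter fun j => i ∉ e j).card = 0 ↔
      ∀ j ∈ C, Disjoint (e j) I := by
  simp only [Finset.sum_eq_zero_iff, Finset.card_eq_zero, Finset.sdiff_eq_empty_iff_subset,
    Finset.subset_iff, Finset.mem_filter_univ, Finset.disjoint_right]
  exact ⟨fun h j hj i hi => h i hi hj, fun h i hi j hj => h j hj hi⟩

theorem stmt_9_general [Fintype V] {k r : ℕ} (hk : k ≤ Fintype.card V) {e : ι → Finset V}
    (he : ∀ j, (e j).card = r) (hinj : Function.Injective e) :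
    (∃ W : Finset V, W.card = k ∧ ∀ s ∈ W.powersetCard r, ∃ j, e j = s) ↔
      ∃ (C : Finset ι) (I : Finset V),
        C.card = k.choose r ∧ Fintype.card V - k ≤ I.card ∧
        ∑ i ∈ I, (C \ Finset.univ.filter fun j => i ∉ e j).card = 0 := by
  simp only [forall_mem_powersetCard_exists_eq_iff he hinj,
    sum_card_sdiff_filter_notMem_eq_zero_iff]
  constructor
  · rintro ⟨W, rfl, C, hcard, hCW⟩
    exact ⟨C, Wᶜ, hcard, (Finset.card_compl W).ge,
      fun j hj => disjoint_compl_right_iff.mpr (hCW j hj)⟩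
  · rintro ⟨C, I, hcard, hI, hdisj⟩
    have hcompl : Iᶜ.card ≤ k := by
      rw [Finset.card_compl]
      lia
    obtain ⟨W, hIW, rfl⟩ := Finset.exists_superset_card_eq hcompl hk
    exact ⟨W, rfl, C, hcard, fun j hj =>
      (le_compl_iff_disjoint_right.mpr (hdisj j hj)).trans hIW⟩

end

/-- `G` is a `d`-regular simple graph on vertices `Fin n`, given by its
list of distinct edges `e 1, …, e m`. Candidates are edge indices; the vote of vertex
`i` is `{j | i ∉ e j}`. Then `G` has a clique of size `k` iff there are a committee
`C` of size `k(k-1)/2` and an index set `I` of size at least `n - k` with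
disapproval score `∑_{i ∈ I} |C \ S i| = 0`. -/
theorem stmt_9 (n m d k : ℕ) (hk : k ≤ n)
    (e : Fin m → Finset (Fin n))
    (he2 : ∀ j, (e j).card = 2)
    (hinj : Function.Injective e)
    (hreg : ∀ v : Fin n, (Finset.univ.filter fun j => v ∈ e j).card = d) :
    (∃ W : Finset (Fin n), W.card = k ∧
        ∀ u ∈ W, ∀ v ∈ W, u ≠ v → ∃ j, e j = {u, v})
    ↔ ∃ (C : Finset (Fin m)) (I : Finset (Fin n)),
        C.card = k * (k - 1) / 2 ∧ n - k ≤ I.card ∧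
        (∑ i ∈ I, (C \ (Finset.univ.filter fun j : Fin m => i ∉ e j)).card) = 0 := by
  simpa only [forall_mem_powersetCard_two_iff, Nat.choose_two_right, Fintype.card_fin] using
    stmt_9_general (hk.trans_eq (Fintype.card_fin n).symm) he2 hinj
end

section
/- Let G be a simple graph with vertex set {1,…,n} and edge set E, and let k satisfy 1 ≤ k ≤ n. The candidate set consists of one candidate c_e for each edge e ∈ E together with a disjoint set D of k(k−1)/2 dummy candidates. The votes (counted with multiplicity) are: for each vertex i ∈ {1,…,n}, the vote S_i = { c_e : i ∉ e }, together with n+2k votes each equal to D (so 2n+2k votes in total). Then G contains a clique of size k if and only if there exist a committee C* of size k(k−1) and a sub-multiset V* of the votes with |V*| ≥ 2n+k such that Σ_{S∈V*} (|C* ∖ S| − |C* ∩ S|) ≤ 0 (as integers). -/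
/-- The votes in the STATEMENT 10 construction: candidates are the edges of the graph
(`Fin m`) together with a disjoint set `D` of `k(k-1)/2` dummy candidates
(`Fin (k * (k - 1) / 2)`). For each vertex `i : Fin n` there is one vote
`S i = {c_e : i ∉ e}`, and there are `n + 2k` further votes each equal to `D`. -/
def stmt10Vote (n m k : ℕ) (e : Fin m → Finset (Fin n)) :
    Fin n ⊕ Fin (n + 2 * k) → Finset (Fin m ⊕ Fin (k * (k - 1) / 2))
  | Sum.inl i => (Finset.univ.filter fun j => i ∉ e j).map ⟨Sum.inl, Sum.inl_injective⟩
  | Sum.inr _ => Finset.univ.map ⟨Sum.inr, Sum.inr_injective⟩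

/-!
The argument works for `r`-uniform hypergraphs. Let `Q` and `F` be the edges and the dummies in the
committee, and let `A` and `B` be the vertex votes and the padding votes that are retained. The vote
of a vertex `i` contributes `|F| - |Q| + 2 * deg_Q i` to the score and a padding vote contributes
`|Q| - |F|`, so the total is `(|B| - |A|) * (|Q| - |F|) + 2 * ∑ i ∈ A, deg_Q i`. There are so many
padding votes that discarding at most `k` votes leaves `|A| < |B|`, and the committee is twice as
large as the set of dummies, so `|F| ≤ |Q|`. Both terms are therefore nonnegative, and the score is
at most `0` exactly when `|Q| = |F|` and no edge of `Q` meets `A`. At most `k` vertices lie outside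
`A`, and `Q` has `k.choose r` edges, all of them among these vertices: this is possible only if
these vertices lie in a `k`-clique. Conversely, the edges of a `k`-clique and all the dummies form a
committee whose score vanishes once the votes of the vertices of the clique are discarded.
-/

section

open Finset

variable {α β V E D P : Type*}

/-- The net disapproval score of the committee `C` in the vote `S`. -/
def netDisapproval [DecidableEq α] (C S : Finset α) : ℤ :=
  #(C \ S) - #(C ∩ S)

/-- The votes of the clique election for a hypergraph with edges `e j`, where `D` is the set of
dummy candidates: a vertex approves of the edges that avoid it, and each padding vote in `P`
approves of exactly the dummies. -/
def hypergraphVote [Fintype E] [Fintype D] [DecidableEq V] (e : E → Finset V) :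
    V ⊕ P → Finset (E ⊕ D)
  | Sum.inl i => (univ.filter fun j => i ∉ e j).map .inl
  | Sum.inr _ => univ.map .inr

theorem netDisapproval_eq_toLeft_add_toRight [DecidableEq α] [DecidableEq β]
    (C S : Finset (α ⊕ β)) :
    netDisapproval C S
      = netDisapproval C.toLeft S.toLeft + netDisapproval C.toRight S.toRight := by
  simp only [netDisapproval, ← toLeft_sdiff, ← toRight_sdiff, ← toLeft_inter, ← toRight_inter,
    ← card_toLeft_add_card_toRight (u := C \ S), ← card_toLeft_add_card_toRight (u := C ∩ S)]
  push_cast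
  ring

theorem netDisapproval_empty [DecidableEq α] (C : Finset α) : netDisapproval C ∅ = #C := by
  simp [netDisapproval]

theorem netDisapproval_univ [DecidableEq α] [Fintype α] (C : Finset α) :
    netDisapproval C univ = -#C := by
  simp [netDisapproval]

theorem netDisapproval_filter_not [DecidableEq α] [Fintype α] (C : Finset α) (p : α → Prop)
    [DecidablePred p] :
    netDisapproval C {a | ¬ p a} = 2 * #{a ∈ C | p a} - #C := by
  have hsdiff : C \ ({a | ¬ p a} : Finset α) = {a ∈ C | p a} := by ext; simp
  have hcard := card_inter_add_card_sdiff C ({a | ¬ p a} : Finset α)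
  rw [hsdiff] at hcard
  rw [netDisapproval, hsdiff]
  omega

section Score

variable [Fintype E] [Fintype D] [DecidableEq V] [DecidableEq E] [DecidableEq D]
  (e : E → Finset V) (C : Finset (E ⊕ D))

theorem netDisapproval_hypergraphVote_inl (i : V) :
    netDisapproval C (hypergraphVote (P := P) e (.inl i))
      = #C.toRight - #C.toLeft + 2 * #{j ∈ C.toLeft | i ∈ e j} := by
  have hleft : (hypergraphVote (D := D) (P := P) e (.inl i)).toLeft
      = ({j | i ∉ e j} : Finset E) := by
    ext; simp [hypergraphVote]
  have hright : (hypergraphVote (D := D) (P := P) e (.inl i)).toRight = ∅ := by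
    ext; simp [hypergraphVote]
  rw [netDisapproval_eq_toLeft_add_toRight, hleft, hright, netDisapproval_filter_not,
    netDisapproval_empty]
  ring

theorem netDisapproval_hypergraphVote_inr (x : P) :
    netDisapproval C (hypergraphVote e (.inr x)) = #C.toLeft - #C.toRight := by
  have hleft : (hypergraphVote (D := D) e (.inr x)).toLeft = ∅ := by
    ext; simp [hypergraphVote]
  have hright : (hypergraphVote (D := D) e (.inr x)).toRight = univ := by
    ext; simp [hypergraphVote]
  rw [netDisapproval_eq_toLeft_add_toRight, hleft, hright, netDisapproval_empty,
    netDisapproval_univ]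
  ring

theorem sum_netDisapproval_hypergraphVote (I : Finset (V ⊕ P)) :
    ∑ x ∈ I, netDisapproval C (hypergraphVote e x)
      = (#I.toRight - #I.toLeft : ℤ) * (#C.toLeft - #C.toRight)
        + 2 * ∑ i ∈ I.toLeft, (#{j ∈ C.toLeft | i ∈ e j} : ℤ) := by
  rw [sum_sum_eq_sum_toLeft_add_sum_toRight]
  simp only [netDisapproval_hypergraphVote_inl, netDisapproval_hypergraphVote_inr,
    sum_add_distrib, sum_const, ← mul_sum, nsmul_eq_mul]
  ring

variable {C} in
theorem sum_netDisapproval_hypergraphVote_nonpos_iff {I : Finset (V ⊕ P)}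
    (hI : #I.toLeft < #I.toRight) (hC : #C.toRight ≤ #C.toLeft) :
    ∑ x ∈ I, netDisapproval C (hypergraphVote e x) ≤ 0
      ↔ #C.toLeft = #C.toRight ∧ ∀ j ∈ C.toLeft, Disjoint (e j) I.toLeft := by
  have hI' : (0 : ℤ) < #I.toRight - #I.toLeft := by omega
  have hC' : (0 : ℤ) ≤ #C.toLeft - #C.toRight := by omega
  have hproduct := mul_nonneg hI'.le hC'
  have hdegree : (0 : ℤ) ≤ ∑ i ∈ I.toLeft, (#{j ∈ C.toLeft | i ∈ e j} : ℤ) := by positivity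
  calc
    _ ↔ (#I.toRight - #I.toLeft : ℤ) * (#C.toLeft - #C.toRight) = 0
        ∧ ∑ i ∈ I.toLeft, (#{j ∈ C.toLeft | i ∈ e j} : ℤ) = 0 := by
      rw [sum_netDisapproval_hypergraphVote]
      omega
    _ ↔ _ := by
      rw [mul_eq_zero_iff_left hI'.ne', sub_eq_zero, Nat.cast_inj,
        sum_eq_zero_iff_of_nonneg fun _ _ => by positivity]
      simp only [Nat.cast_eq_zero, card_eq_zero, filter_eq_empty_iff, disjoint_right]
      exact and_congr_right fun _ => forall₂_comm

end Score

theorem forall_subset_card_eq_two_iff [DecidableEq V] {W : Finset V} {p : Finset V → Prop} :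
    (∀ s ⊆ W, #s = 2 → p s) ↔ ∀ u ∈ W, ∀ v ∈ W, u ≠ v → p {u, v} := by
  constructor
  · intro h u hu v hv huv
    exact h _ (insert_subset hu (singleton_subset_iff.2 hv)) (card_pair huv)
  · intro h s hs hcard
    obtain ⟨u, v, huv, rfl⟩ := card_eq_two.1 hcard
    exact h u (hs (by simp)) v (hs (by simp)) huv

section Uniform

variable [Fintype E] [DecidableEq V] {e : E → Finset V} {r : ℕ}

theorem image_filter_subset_subset_powersetCard (he : ∀ j, #(e j) = r) (W : Finset V) :
    ({j | e j ⊆ W} : Finset E).image e ⊆ W.powersetCard r :=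
  image_subset_iff.2 fun j hj => mem_powersetCard.2 ⟨(mem_filter.1 hj).2, he j⟩

theorem card_filter_subset_le_choose (he : ∀ j, #(e j) = r) (hinj : e.Injective) (W : Finset V) :
    #{j | e j ⊆ W} ≤ (#W).choose r := by
  rw [← card_image_of_injective _ hinj, ← card_powersetCard]
  exact card_le_card (image_filter_subset_subset_powersetCard he W)

theorem forall_subset_exists_edge_iff_choose_le_card (he : ∀ j, #(e j) = r) (hinj : e.Injective)
    {W : Finset V} :
    (∀ s ⊆ W, #s = r → ∃ j, e j = s) ↔ (#W).choose r ≤ #{j | e j ⊆ W} := by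
  have hsub := image_filter_subset_subset_powersetCard he W
  rw [← card_image_of_injective _ hinj, ← card_powersetCard]
  constructor
  · refine fun h => card_le_card fun s hs => ?_
    obtain ⟨hsW, hcard⟩ := mem_powersetCard.1 hs
    obtain ⟨j, rfl⟩ := h s hsW hcard
    exact mem_image_of_mem e (by simpa using hsW)
  · intro hcard s hsW hs
    have hmem : s ∈ W.powersetCard r := mem_powersetCard.2 ⟨hsW, hs⟩
    rw [← eq_of_subset_of_card_le hsub hcard] at hmem
    obtain ⟨j, -, hj⟩ := mem_image.1 hmem
    exact ⟨j, hj⟩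

end Uniform

section Reduction

variable [Fintype V] [Fintype E] [Fintype D] [Fintype P]
  [DecidableEq V] [DecidableEq E] [DecidableEq D] [DecidableEq P]
  {e : E → Finset V} {r k : ℕ}

theorem exists_committee_of_clique (he : ∀ j, #(e j) = r) (hinj : e.Injective)
    (hD : Fintype.card D = k.choose r) (hP : Fintype.card V < Fintype.card P + k)
    {W : Finset V} (hW : #W = k) (hclique : ∀ s ⊆ W, #s = r → ∃ j, e j = s) :
    ∃ (C : Finset (E ⊕ D)) (I : Finset (V ⊕ P)), #C = 2 * Fintype.card D ∧ #Iᶜ ≤ k ∧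
      ∑ x ∈ I, netDisapproval C (hypergraphVote e x) ≤ 0 := by
  have hedges : #{j | e j ⊆ W} = Fintype.card D := by
    rw [hD, ← hW]
    exact (card_filter_subset_le_choose he hinj W).antisymm
      ((forall_subset_exists_edge_iff_choose_le_card he hinj).1 hclique)
  refine ⟨({j | e j ⊆ W} : Finset E).disjSum univ, Wᶜ.disjSum univ, ?_, ?_, ?_⟩
  · rw [card_disjSum, hedges, card_univ, two_mul]
  · rw [card_compl, card_disjSum, card_compl, card_univ, Fintype.card_sum]
    omega
  · have hvotes : #Wᶜ < #(univ : Finset P) := by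
      have := card_le_univ W
      rw [card_compl, card_univ]
      omega
    rw [sum_netDisapproval_hypergraphVote_nonpos_iff e (by simpa using hvotes)
      (by simp [hedges])]
    simp [hedges, disjoint_compl_right_iff]

theorem exists_clique_of_committee (he : ∀ j, #(e j) = r) (hinj : e.Injective)
    (hk : k ≤ Fintype.card V) (hD : Fintype.card D = k.choose r)
    (hP : Fintype.card V + k < Fintype.card P) {C : Finset (E ⊕ D)} {I : Finset (V ⊕ P)}
    (hC : #C = 2 * Fintype.card D) (hI : #Iᶜ ≤ k)
    (hscore : ∑ x ∈ I, netDisapproval C (hypergraphVote e x) ≤ 0) :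
    ∃ W : Finset V, #W = k ∧ ∀ s ⊆ W, #s = r → ∃ j, e j = s := by
  have hCsplit := card_toLeft_add_card_toRight (u := C)
  have hIsplit := card_toLeft_add_card_toRight (u := I)
  have hdummies := card_le_univ C.toRight
  have hvertices := card_le_univ I.toLeft
  have hpadding := card_le_univ I.toRight
  rw [card_compl, Fintype.card_sum] at hI
  obtain ⟨-, havoid⟩ :=
    (sum_netDisapproval_hypergraphVote_nonpos_iff e (by omega) (by omega)).1 hscore
  obtain ⟨W, hsub, hW⟩ : ∃ W, I.toLeftᶜ ⊆ W ∧ #W = k :=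
    exists_superset_card_eq (by rw [card_compl]; omega) hk
  refine ⟨W, hW, (forall_subset_exists_edge_iff_choose_le_card he hinj).2 ?_⟩
  calc
    (#W).choose r ≤ #C.toLeft := by rw [hW]; omega
    _ ≤ #{j | e j ⊆ W} := card_le_card fun j hj => by
      simpa using (subset_compl_iff_disjoint_right.2 (havoid j hj)).trans hsub

theorem stmt_10_general (he : ∀ j, #(e j) = r) (hinj : e.Injective)
    (hk : k ≤ Fintype.card V) (hD : Fintype.card D = k.choose r)
    (hP : Fintype.card V + k < Fintype.card P) :
    (∃ W : Finset V, #W = k ∧ ∀ s ⊆ W, #s = r → ∃ j, e j = s)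
      ↔ ∃ (C : Finset (E ⊕ D)) (I : Finset (V ⊕ P)), #C = 2 * Fintype.card D ∧ #Iᶜ ≤ k ∧
        ∑ x ∈ I, netDisapproval C (hypergraphVote e x) ≤ 0 :=
  ⟨fun ⟨_, hW, hclique⟩ => exists_committee_of_clique he hinj hD (by omega) hW hclique,
    fun ⟨_, _, hC, hI, hscore⟩ => exists_clique_of_committee he hinj hk hD hP hC hI hscore⟩

end Reduction

theorem stmt10Vote_eq_hypergraphVote (n m k : ℕ) (e : Fin m → Finset (Fin n)) :
    stmt10Vote n m k e = hypergraphVote e := by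
  ext1 (i | x) <;> rfl

end

/-- `G` is a simple graph on vertices `Fin n` given by its list of
distinct edges, and `1 ≤ k ≤ n`. With the election of `stmt10Vote` (in total
`2n + 2k` votes), `G` has a clique of size `k` iff there are a committee `C` of size
`k(k-1)` and a sub-multiset of the votes (an index set `I`) of size at least
`2n + k` whose net disapproval score `∑ (|C \ S| - |C ∩ S|)` is at most `0`. -/
theorem stmt_10 (n m k : ℕ) (hk1 : 1 ≤ k) (hkn : k ≤ n)
    (e : Fin m → Finset (Fin n))
    (he2 : ∀ j, (e j).card = 2)
    (hinj : Function.Injective e) :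
    (∃ W : Finset (Fin n), W.card = k ∧
        ∀ u ∈ W, ∀ v ∈ W, u ≠ v → ∃ j, e j = {u, v})
    ↔ ∃ (C : Finset (Fin m ⊕ Fin (k * (k - 1) / 2)))
        (I : Finset (Fin n ⊕ Fin (n + 2 * k))),
        C.card = k * (k - 1) ∧ 2 * n + k ≤ I.card ∧
        (∑ x ∈ I,
            (((C \ stmt10Vote n m k e x).card : ℤ)
              - ((C ∩ stmt10Vote n m k e x).card : ℤ))) ≤ 0 := by
  have hcommittee : k * (k - 1) = 2 * (k * (k - 1) / 2) :=
    (Nat.two_mul_div_two_of_even (Nat.even_mul_pred_self k)).symm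
  have hquota (I : Finset (Fin n ⊕ Fin (n + 2 * k))) : 2 * n + k ≤ I.card ↔ Iᶜ.card ≤ k := by
    simp only [Finset.card_compl, Fintype.card_sum, Fintype.card_fin]
    omega
  have hgeneral := stmt_10_general (D := Fin (k * (k - 1) / 2)) (P := Fin (n + 2 * k)) (k := k)
    he2 hinj (by simpa using hkn) (by simp [Nat.choose_two_right])
    (by simp only [Fintype.card_fin]; omega)
  simpa only [forall_subset_card_eq_two_iff, ← stmt10Vote_eq_hypergraphVote, ← hquota,
    Fintype.card_fin, ← hcommittee, netDisapproval] using hgeneral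
end

section
/- Let G be a d-regular simple graph with vertex set {1,…,n} and edges e_1,…,e_m, and let k ≤ n. Identify candidates with edge indices and, for each vertex i ∈ {1,…,n}, define the vote S_i = { j ∈ {1,…,m} : i ∈ e_j } (the edges incident to vertex i, so |S_i| = d). Then G contains a clique of size k if and only if there exist a committee C* ⊆ {1,…,m} whose complement {1,…,m} ∖ C* has exactly k(k−1)/2 elements and an index set I ⊆ {1,…,n} with |I| ≥ n−k such that Σ_{i∈I} |C* ∖ S_i| ≤ (n−k)·(m − k(k−1)/2 − d) (as integers). -/
/-!
If every voter approves of exactly `d` candidates, then `|C \ S i| = |C| - d + |Cᶜ ∩ S i|`, so the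
committee `C` scores at least `|I| * (|C| - d)` on `I`, with equality iff no voter in `I` approves
of a candidate outside `C`. When votes are sets of incident edges, equality says that every edge
outside `C` lies inside `Iᶜ`. A set of `k` vertices contains at most `k.choose r` edges of an
`r`-uniform hypergraph, and contains that many only if it is a clique.
-/

open Finset

variable {V E : Type*}

section Hypergraph

variable [DecidableEq V] [Fintype E]

/-- The edges incident to the vertex `v` in the hypergraph with edge family `e`; these are the
candidates that voter `v` approves of. -/
def incidentEdges (e : E → Finset V) (v : V) : Finset E := {j | v ∈ e j}

/-- A clique `W` of an `r`-uniform hypergraph with edge family `e`: every `r`-element subset of `W`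
is an edge. For `r = 2` this is the usual notion for graphs. -/
def IsUniformClique (e : E → Finset V) (r : ℕ) (W : Finset V) : Prop :=
  powersetCard r W ⊆ univ.image e

theorem forall_disjoint_incidentEdges_iff [Fintype V] {e : E → Finset V} {F : Finset E}
    {I : Finset V} :
    (∀ i ∈ I, Disjoint F (incidentEdges e i)) ↔ ∀ j ∈ F, e j ⊆ Iᶜ := by
  simp only [incidentEdges, disjoint_left, subset_iff, mem_filter_univ, mem_compl]
  grind

theorem isUniformClique_two_iff {e : E → Finset V} {W : Finset V} :
    IsUniformClique e 2 W ↔ ∀ u ∈ W, ∀ v ∈ W, u ≠ v → ∃ j, e j = {u, v} := by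
  constructor
  · intro hW u hu v hv huv
    have hpair : {u, v} ∈ powersetCard 2 W :=
      mem_powersetCard.2 ⟨insert_subset hu (singleton_subset_iff.2 hv), card_pair huv⟩
    simpa only [mem_image, mem_univ, true_and] using hW hpair
  · intro hW s hs
    obtain ⟨hsW, hcard⟩ := mem_powersetCard.1 hs
    obtain ⟨u, v, huv, rfl⟩ := card_eq_two.1 hcard
    obtain ⟨j, hj⟩ := hW u (hsW (by simp)) v (hsW (by simp)) huv
    exact mem_image.2 ⟨j, mem_univ j, hj⟩

theorem isUniformClique_iff_exists_card_eq_choose {e : E → Finset V} {r : ℕ}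
    (he : ∀ j, #(e j) = r) (hinj : Function.Injective e) {W : Finset V} :
    IsUniformClique e r W ↔ ∃ F : Finset E, #F = (#W).choose r ∧ ∀ j ∈ F, e j ⊆ W := by
  constructor
  · intro hW
    obtain ⟨F, -, hF⟩ := subset_image_iff.1 hW
    refine ⟨F, ?_, fun j hj => ?_⟩
    · rw [← card_image_of_injective F hinj, hF, card_powersetCard]
    · exact (mem_powersetCard.1 (hF ▸ mem_image_of_mem e hj)).1
  · rintro ⟨F, hcard, hFW⟩
    have hsub : F.image e ⊆ powersetCard r W :=
      image_subset_iff.2 fun j hj => mem_powersetCard.2 ⟨hFW j hj, he j⟩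
    have heq : F.image e = powersetCard r W := by
      refine eq_of_subset_of_card_le hsub ?_
      rw [card_powersetCard, card_image_of_injective F hinj, hcard]
    exact heq.symm.subset.trans (image_subset_image (subset_univ F))

end Hypergraph

variable [DecidableEq E]

/-- The disapproval score `∑ i ∈ I, |X \ S i|` of the committee `X` for the voters in `I`, where
voter `i` approves of the candidates in `S i`. -/
def disapprovalScore (S : V → Finset E) (X : Finset E) (I : Finset V) : ℕ :=
  ∑ i ∈ I, #(X \ S i)

theorem disapprovalScore_mono (S : V → Finset E) (X : Finset E) :
    Monotone (disapprovalScore S X) :=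
  fun _ _ hIJ => sum_le_sum_of_subset hIJ

variable [Fintype E]

theorem card_sdiff_add_card_eq_card_add_card_compl_inter (X S : Finset E) :
    #(X \ S) + #S = #X + #(Xᶜ ∩ S) := by
  rw [card_sdiff_add_card, union_comm, ← card_sdiff_add_card, sdiff_eq_inter_compl, inter_comm S,
    add_comm]

theorem disapprovalScore_eq_card_mul_add_sum {S : V → Finset E} {I : Finset V} {d : ℕ}
    (hS : ∀ i ∈ I, #(S i) = d) (X : Finset E) :
    (disapprovalScore S X I : ℤ) = #I * ((#X : ℤ) - d) + ∑ i ∈ I, #(Xᶜ ∩ S i) := by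
  have hvoter : ∀ i ∈ I, (#(X \ S i) : ℤ) = (#X - d) + #(Xᶜ ∩ S i) := by
    intro i hi
    have := card_sdiff_add_card_eq_card_add_card_compl_inter X (S i)
    have := hS i hi
    omega
  rw [disapprovalScore, Nat.cast_sum, sum_congr rfl hvoter, sum_add_distrib, sum_const,
    nsmul_eq_mul, Nat.cast_sum]

theorem disapprovalScore_le_iff_forall_disjoint {S : V → Finset E} {I : Finset V} {d : ℕ}
    (hS : ∀ i ∈ I, #(S i) = d) (X : Finset E) :
    (disapprovalScore S X I : ℤ) ≤ #I * ((#X : ℤ) - d) ↔ ∀ i ∈ I, Disjoint Xᶜ (S i) := by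
  rw [disapprovalScore_eq_card_mul_add_sum hS, add_le_iff_nonpos_right, ← Nat.cast_zero,
    Nat.cast_le, Nat.le_zero, sum_eq_zero_iff]
  simp only [card_eq_zero, disjoint_iff_inter_eq_empty]

variable [Fintype V] [DecidableEq V]

theorem isUniformClique_compl_iff_exists_disapprovalScore_le {e : E → Finset V} {r d : ℕ}
    (he : ∀ j, #(e j) = r) (hinj : Function.Injective e) {I : Finset V}
    (hreg : ∀ i ∈ I, #(incidentEdges e i) = d) :
    IsUniformClique e r Iᶜ ↔ ∃ C : Finset E, #Cᶜ = (#Iᶜ).choose r ∧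
      (disapprovalScore (incidentEdges e) C I : ℤ) ≤ #I * ((#C : ℤ) - d) := by
  simp only [isUniformClique_iff_exists_card_eq_choose he hinj,
    disapprovalScore_le_iff_forall_disjoint hreg, forall_disjoint_incidentEdges_iff]
  exact compl_surjective.exists

theorem stmt_12_general {e : E → Finset V} {r d k : ℕ} (hk : k ≤ Fintype.card V)
    (he : ∀ j, #(e j) = r) (hinj : Function.Injective e)
    (hreg : ∀ v, #(incidentEdges e v) = d) :
    (∃ W : Finset V, #W = k ∧ IsUniformClique e r W) ↔
      ∃ (C : Finset E) (I : Finset V), #Cᶜ = k.choose r ∧ Fintype.card V - k ≤ #I ∧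
        (disapprovalScore (incidentEdges e) C I : ℤ) ≤
          ((Fintype.card V : ℤ) - k) * ((Fintype.card E : ℤ) - (k.choose r : ℕ) - d) := by
  have hC (C : Finset E) : (#C : ℤ) = Fintype.card E - #Cᶜ := by
    have := card_add_card_compl C
    omega
  have hclique (I : Finset V) := isUniformClique_compl_iff_exists_disapprovalScore_le he hinj
    (I := I) fun i _ => hreg i
  constructor
  · rintro ⟨W, rfl, hW⟩
    obtain ⟨C, hcard, hscore⟩ := (hclique Wᶜ).1 (by rwa [compl_compl])
    rw [compl_compl] at hcard
    refine ⟨C, Wᶜ, hcard, (card_compl W).ge, ?_⟩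
    rwa [hC C, hcard, card_compl, Nat.cast_sub hk] at hscore
  · rintro ⟨C, I, hcard, hI, hscore⟩
    obtain ⟨J, hJI, hJ⟩ := exists_subset_card_eq hI
    have hJc : #Jᶜ = k := by rw [card_compl, hJ, Nat.sub_sub_self hk]
    refine ⟨Jᶜ, hJc, (hclique J).2 ⟨C, by rw [hcard, hJc], ?_⟩⟩
    rw [hC C, hcard, hJ, Nat.cast_sub hk]
    exact (Nat.cast_le.2 (disapprovalScore_mono _ C hJI)).trans hscore

/-- `G` is a `d`-regular simple graph on vertices `Fin n`, given by its
list of distinct edges `e 1, …, e m`. Candidates are edge indices; the vote of vertex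
`i` is the set of edges incident to `i`. Then `G` has a clique of size `k` iff there
are a committee `C` whose complement has exactly `k(k-1)/2` elements and an index set
`I` of size at least `n - k` with disapproval score
`∑_{i ∈ I} |C \ S i| ≤ (n-k)(m - k(k-1)/2 - d)`. -/
theorem stmt_12 (n m d k : ℕ) (hk : k ≤ n)
    (e : Fin m → Finset (Fin n))
    (he2 : ∀ j, (e j).card = 2)
    (hinj : Function.Injective e)
    (hreg : ∀ v : Fin n, (Finset.univ.filter fun j => v ∈ e j).card = d) :
    (∃ W : Finset (Fin n), W.card = k ∧
        ∀ u ∈ W, ∀ v ∈ W, u ≠ v → ∃ j, e j = {u, v})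
    ↔ ∃ (C : Finset (Fin m)) (I : Finset (Fin n)),
        Cᶜ.card = k * (k - 1) / 2 ∧ n - k ≤ I.card ∧
        (∑ i ∈ I, ((C \ (Finset.univ.filter fun j : Fin m => i ∈ e j)).card : ℤ))
          ≤ ((n : ℤ) - (k : ℤ)) * ((m : ℤ) - ((k * (k - 1) / 2 : ℕ) : ℤ) - (d : ℤ)) := by
  simpa only [isUniformClique_two_iff, Nat.choose_two_right, Fintype.card_fin, disapprovalScore,
    incidentEdges, Nat.cast_sum]
    using stmt_12_general (hk.trans_eq (Fintype.card_fin n).symm) he2 hinj hreg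
end

section
/- Let C be a candidate set of size m, let V = (S_1,…,S_n) be a family of n votes (subsets of C), and let V′ be a sub-multiset of V of size r ≥ 1. For a candidate c, let app_V(c) denote the number of votes of V containing c and app_{V′}(c) the number of votes of V′ (with multiplicity) containing c. Let ε > 0 and suppose that |(n/r)·app_{V′}(c) − app_V(c)| ≤ εn for every candidate c ∈ C. Let m* ≤ m, let X be a size-m* committee minimizing Σ_{S∈V} |X Δ S| over all size-m* committees, and let X′ be a size-m* committee minimizing Σ_{S∈V′} |X′ Δ S| over all size-m* committees. Then Σ_{S∈V} |X′ Δ S| ≤ Σ_{S∈V} |X Δ S| + 4εn·|X′ ∖ X| (as real numbers). -/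
open scoped symmDiff

/-!
Among committees of a fixed size, the minisum score is a constant minus twice the total approval of
the members. Replacing the approval counts of `V` by the rescaled counts of `V'` perturbs the weight
of each candidate by at most `δ`, and comparing two committees `X`, `X'` of equal size only involves
the `2 * #(X' \ X)` candidates in which they differ. So if `X'` has at least the total approval of
`X` in `V'`, it trails `X` in `V` by at most `2 * δ * #(X' \ X)` approvals, hence by at most twice
that in score.
-/

section

open Finset

variable {C : Type*} [DecidableEq C]

/-- The minisum score of the committee `X` for a profile `V`, the votes being a multiset so that
repeated votes count with multiplicity. -/
def minisumScore (V : Multiset (Finset C)) (X : Finset C) : ℕ :=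
  (V.map fun S => #(X ∆ S)).sum

/-- The number of votes of the profile `V`, with multiplicity, that approve the candidate `c`. -/
def approvalCount (V : Multiset (Finset C)) (c : C) : ℕ :=
  Multiset.card (V.filter fun S => c ∈ S)

theorem card_symmDiff_add_two_mul_card_inter (X S : Finset C) :
    #(X ∆ S) + 2 * #(X ∩ S) = #S + #X := by
  have hsymm : #(X ∆ S) = #(X \ S) + #(S \ X) := card_union_of_disjoint disjoint_sdiff_sdiff
  have hX := card_sdiff_add_card_inter X S
  have hS := card_sdiff_add_card_inter S X
  rw [inter_comm S X] at hS
  omega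

theorem sum_approvalCount (V : Multiset (Finset C)) (X : Finset C) :
    ∑ c ∈ X, approvalCount V c = (V.map fun S => #(X ∩ S)).sum := by
  simp only [approvalCount, ← Multiset.countP_eq_card_filter]
  induction V using Multiset.induction_on with
  | empty => simp
  | cons S V ih =>
    simp only [Multiset.countP_cons, sum_add_distrib, ih, sum_boole, filter_mem_eq_inter,
      Nat.cast_id, Multiset.map_cons, Multiset.sum_cons, add_comm]

theorem minisumScore_add_two_mul_sum_approvalCount (V : Multiset (Finset C)) (X : Finset C) :
    minisumScore V X + 2 * ∑ c ∈ X, approvalCount V c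
      = (V.map card).sum + Multiset.card V * #X := by
  rw [minisumScore, sum_approvalCount, ← Multiset.sum_map_mul_left, ← Multiset.sum_map_add]
  simp only [card_symmDiff_add_two_mul_card_inter, Multiset.sum_map_add, Multiset.map_const',
    Multiset.sum_replicate, smul_eq_mul]

theorem minisumScore_le_minisumScore_iff {V : Multiset (Finset C)} {X Y : Finset C}
    (hcard : #X = #Y) :
    minisumScore V X ≤ minisumScore V Y ↔
      ∑ c ∈ Y, approvalCount V c ≤ ∑ c ∈ X, approvalCount V c := by
  have hX := minisumScore_add_two_mul_sum_approvalCount V X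
  have hY := minisumScore_add_two_mul_sum_approvalCount V Y
  rw [hcard] at hX
  omega

variable {R : Type*} [CommRing R] [LinearOrder R] [IsStrictOrderedRing R]

theorem sum_le_sum_add_of_abs_sub_le {X Y : Finset C} {f g : C → R} {δ : R} (hcard : #X = #Y)
    (hfg : ∀ c ∈ X ∆ Y, |g c - f c| ≤ δ) (hg : ∑ c ∈ X, g c ≤ ∑ c ∈ Y, g c) :
    ∑ c ∈ X, f c ≤ ∑ c ∈ Y, f c + 2 * δ * #(Y \ X) := by
  have hX : #(X \ Y) • (-δ) ≤ ∑ c ∈ X \ Y, (g c - f c) :=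
    card_nsmul_le_sum _ _ _ fun c hc => (abs_le.mp (hfg c (mem_union_left _ hc))).1
  have hY : ∑ c ∈ Y \ X, (g c - f c) ≤ #(Y \ X) • δ :=
    sum_le_card_nsmul _ _ _ fun c hc => (abs_le.mp (hfg c (mem_union_right _ hc))).2
  have hdiff : ∑ c ∈ X \ Y, (g c - f c) - ∑ c ∈ Y \ X, (g c - f c)
      = ∑ c ∈ X, (g c - f c) - ∑ c ∈ Y, (g c - f c) := sum_sdiff_sub_sum_sdiff
  rw [card_sdiff_comm hcard] at hX
  simp only [nsmul_eq_mul, sum_sub_distrib] at hX hY hdiff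
  linarith

theorem stmt_15_general {V V' : Multiset (Finset C)} {X X' : Finset C} {t δ : R} (ht : 0 ≤ t)
    (happ : ∀ c ∈ X ∆ X', |t * approvalCount V' c - approvalCount V c| ≤ δ) (hcard : #X = #X')
    (hscore : minisumScore V' X' ≤ minisumScore V' X) :
    (minisumScore V X' : R) ≤ minisumScore V X + 4 * δ * #(X' \ X) := by
  have hsample : ∑ c ∈ X, t * (approvalCount V' c : R)
      ≤ ∑ c ∈ X', t * (approvalCount V' c : R) := by
    rw [← mul_sum, ← mul_sum]
    exact mul_le_mul_of_nonneg_left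
      (mod_cast (minisumScore_le_minisumScore_iff hcard.symm).mp hscore) ht
  have hfull : ∑ c ∈ X, (approvalCount V c : R)
      ≤ ∑ c ∈ X', (approvalCount V c : R) + 2 * δ * #(X' \ X) :=
    sum_le_sum_add_of_abs_sub_le hcard happ hsample
  have hX := congrArg (Nat.cast : ℕ → R) (minisumScore_add_two_mul_sum_approvalCount V X)
  have hX' := congrArg (Nat.cast : ℕ → R) (minisumScore_add_two_mul_sum_approvalCount V X')
  rw [hcard] at hX
  push_cast at hX hX'
  linarith

theorem minisumScore_map_univ {ι : Type*} [Fintype ι] (V : ι → Finset C) (X : Finset C) :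
    minisumScore (univ.val.map V) X = ∑ i, #(X ∆ V i) := by
  rw [minisumScore, Multiset.map_map]
  rfl

theorem approvalCount_map_univ {ι : Type*} [Fintype ι] (V : ι → Finset C) (c : C) :
    approvalCount (univ.val.map V) c = #{i | c ∈ V i} := by
  rw [approvalCount, Multiset.filter_map, Multiset.card_map]
  rfl

end

/-- `V` is a family of `n` votes over candidates `Fin m`, and `V'` is a
sub-multiset of `V` of size `r ≥ 1`. Suppose `|(n/r)·app_{V'}(c) − app_V(c)| ≤ ε n`
for every candidate `c`. If `X` is a size-`mstar` committee minimizing the minisum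
score over `V` and `X'` is a size-`mstar` committee minimizing the minisum score over
`V'`, then `∑_{S ∈ V} |X' ∆ S| ≤ ∑_{S ∈ V} |X ∆ S| + 4εn·|X' \ X|`. -/
theorem stmt_15 (m n : ℕ) (V : Fin n → Finset (Fin m))
    (V' : Multiset (Finset (Fin m))) (hsub : V' ≤ Finset.univ.val.map V)
    (r : ℕ) (hr : Multiset.card V' = r) (hr1 : 1 ≤ r)
    (ε : ℝ) (hε : 0 < ε)
    (happ : ∀ c : Fin m,
      |(n : ℝ) / (r : ℝ) * ((Multiset.card (V'.filter fun T => c ∈ T)) : ℝ)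
          - (((Finset.univ.filter fun i => c ∈ V i).card : ℕ) : ℝ)| ≤ ε * n)
    (mstar : ℕ) (hm : mstar ≤ m)
    (X : Finset (Fin m)) (hX : X.card = mstar)
    (hXmin : ∀ Y : Finset (Fin m), Y.card = mstar →
      ∑ i, (X ∆ V i).card ≤ ∑ i, (Y ∆ V i).card)
    (X' : Finset (Fin m)) (hX' : X'.card = mstar)
    (hX'min : ∀ Y : Finset (Fin m), Y.card = mstar →
      (V'.map fun T => (X' ∆ T).card).sum ≤ (V'.map fun T => (Y ∆ T).card).sum) :
    ((∑ i, (X' ∆ V i).card : ℕ) : ℝ) ≤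
      ((∑ i, (X ∆ V i).card : ℕ) : ℝ) + 4 * ε * n * ((X' \ X).card : ℝ) := by
  simp only [← minisumScore_map_univ, ← approvalCount_map_univ] at happ ⊢
  simpa only [mul_assoc] using stmt_15_general (by positivity : (0 : ℝ) ≤ n / r)
    (fun c _ => happ c) (hX.trans hX'.symm) (hX'min X hX)
end
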